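/- Let Γ₁ : [n+r] → [n] × [r] and Γ₂ : [m+r] → [m] × [r] be maximal chains, and let α : [m] → [n] and β : [m+r] → [n+r] be monotone maps such that (α((Γ₂ k).fst), (Γ₂ k).snd) = Γ₁(β k) for all k ∈ [m+r]. Then β(fs_{Γ₂}(i)) = fs_{Γ₁}(i) for every i with 1 ≤ i ≤ r. -/

import Mathlib

open Finset

/-- `fs_Γ(i) = min { j | (Γ j).snd ≥ i }` (defined to be `0` if the set is
empty; for maximal chains the set is always nonempty). -/
def fs {p n r : ℕ} (Γ : Fin (p + 1) → Fin (n + 1) × Fin (r + 1))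
    (i : Fin (r + 1)) : Fin (p + 1) :=
  if h : (univ.filter fun j => i ≤ (Γ j).2).Nonempty
  then (univ.filter fun j => i ≤ (Γ j).2).min' h else 0

/-!
A maximal chain in `[n] × [r]` meets every rank `a + b` exactly once, so each of its steps raises
exactly one coordinate, by one. Hence, for `0 < i`, it enters height `i` by a vertical step from
`(a, i - 1)` to `(a, i)`. Conversely, if a chain contains `(a, i)` and some `(a, b)` with
`b < i`, then `(a, i)` is its first point of height at least `i`: every such point comes after
`(a, b)`, so its first coordinate is at least `a`. The map `(a, b) ↦ (α a, b)` preserves vertical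
pairs of points and their heights.
-/

section Rank

variable {ι P : Type*} [LinearOrder ι] {ρ : P → ι} {f : ι → P}

theorem map_covBy_of_strictMono [WellFoundedLT ι] [WellFoundedGT ι] [Preorder P]
    (hρ : StrictMono ρ) (hf : StrictMono f) {a b : ι} (hab : a ⋖ b) : f a ⋖ f b := by
  refine ⟨hf hab.lt, fun c hac hcb => ?_⟩
  have hlt : a < ρ c := (hρ.comp hf).le_apply.trans_lt (hρ hac)
  have hgt : ρ c < b := (hρ hcb).trans_le (hρ.comp hf).apply_le
  exact hab.2 hlt hgt

theorem map_top_of_strictMono [WellFoundedLT ι] [OrderTop ι] [PartialOrder P] [OrderTop P]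
    (hρ : StrictMono ρ) (hf : StrictMono f) : f ⊤ = ⊤ := by
  by_contra hne
  have hlt : ρ (f ⊤) < ρ ⊤ := hρ (lt_top_iff_ne_top.2 hne)
  have hle : ⊤ ≤ ρ (f ⊤) := (hρ.comp hf).le_apply
  exact not_top_lt (hle.trans_lt hlt)

theorem map_bot_of_strictMono [WellFoundedGT ι] [OrderBot ι] [PartialOrder P] [OrderBot P]
    (hρ : StrictMono ρ) (hf : StrictMono f) : f ⊥ = ⊥ :=
  map_top_of_strictMono hρ.dual hf.dual

end Rank

/-- The rank function of the graded poset `[n] × [r]`, with values in `[n + r]` so that it can be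
composed with a maximal chain. -/
def gridRank {n r : ℕ} (x : Fin (n + 1) × Fin (r + 1)) : Fin (n + r + 1) :=
  ⟨x.1 + x.2, by omega⟩

theorem gridRank_strictMono {n r : ℕ} : StrictMono (gridRank (n := n) (r := r)) := by
  intro x y hxy
  rw [gridRank, gridRank, Fin.mk_lt_mk]
  rcases Prod.lt_iff.1 hxy with ⟨hfst, hsnd⟩ | ⟨hfst, hsnd⟩
  · exact add_lt_add_of_lt_of_le hfst hsnd
  · exact add_lt_add_of_le_of_lt hfst hsnd

section FirstStep

variable {p n r : ℕ} {Γ : Fin (p + 1) → Fin (n + 1) × Fin (r + 1)} {i : Fin (r + 1)}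

theorem isLeast_fs (h : ∃ j, i ≤ (Γ j).2) : IsLeast {j | i ≤ (Γ j).2} (fs Γ i) := by
  have hne : (univ.filter fun j => i ≤ (Γ j).2).Nonempty := by
    simpa only [Finset.Nonempty, mem_filter_univ] using h
  simpa only [fs, dif_pos hne, coe_filter_univ] using isLeast_min' _ hne

theorem fs_eq_of_apply_eq (hΓ : StrictMono Γ) {l k : Fin (p + 1)} (hl : (Γ l).2 < i)
    (hk : Γ k = ((Γ l).1, i)) : fs Γ i = k := by
  have hki : i ≤ (Γ k).2 := by rw [hk]
  refine (isLeast_fs ⟨k, hki⟩).unique ⟨hki, fun j (hj : i ≤ (Γ j).2) => ?_⟩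
  have hlj : l ≤ j := le_of_not_ge fun hjl => (hj.trans (hΓ.monotone hjl).2).not_gt hl
  have hkj : Γ k ≤ Γ j := by
    rw [hk]
    exact ⟨(hΓ.monotone hlj).1, hj⟩
  exact hΓ.le_iff_le.1 hkj

end FirstStep

theorem exists_apply_fs_eq {n r : ℕ} {Γ : Fin (n + r + 1) → Fin (n + 1) × Fin (r + 1)}
    (hΓ : StrictMono Γ) {i : Fin (r + 1)} (hi : 0 < i) :
    ∃ l, (Γ l).2 < i ∧ Γ (fs Γ i) = ((Γ l).1, i) := by
  have htop : i ≤ (Γ ⊤).2 := by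
    rw [map_top_of_strictMono gridRank_strictMono hΓ]
    exact le_top
  obtain ⟨hfs : i ≤ (Γ (fs Γ i)).2, hmin⟩ := isLeast_fs ⟨⊤, htop⟩
  have hfs_ne : fs Γ i ≠ ⊥ := by
    intro hbot
    rw [hbot, map_bot_of_strictMono gridRank_strictMono hΓ] at hfs
    exact hi.not_ge hfs
  have hcov : Order.pred (fs Γ i) ⋖ fs Γ i :=
    Order.pred_covBy_of_not_isMin (not_isMin_iff_ne_bot.2 hfs_ne)
  have hlt : (Γ (Order.pred (fs Γ i))).2 < i := not_le.1 fun h => hcov.lt.not_ge (hmin h)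
  refine ⟨_, hlt, ?_⟩
  rcases Prod.covBy_iff.1 (map_covBy_of_strictMono gridRank_strictMono hΓ hcov) with
    ⟨-, hsnd⟩ | ⟨hsnd, hfst⟩
  · exact absurd (hsnd ▸ hlt) hfs.not_gt
  · exact Prod.ext hfst.symm (hfs.antisymm' (hsnd.ge_of_gt hlt))

theorem beta_fs_general {p n r m : ℕ} {Γ₁ : Fin (p + 1) → Fin (n + 1) × Fin (r + 1)}
    (hΓ₁ : StrictMono Γ₁) {Γ₂ : Fin (m + r + 1) → Fin (m + 1) × Fin (r + 1)}
    (hΓ₂ : StrictMono Γ₂) {α : Fin (m + 1) → Fin (n + 1)} {β : Fin (m + r + 1) → Fin (p + 1)}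
    (hcomm : ∀ k, (α (Γ₂ k).1, (Γ₂ k).2) = Γ₁ (β k)) {i : Fin (r + 1)} (hi : 0 < i) :
    β (fs Γ₂ i) = fs Γ₁ i := by
  obtain ⟨l, hl, hfs⟩ := exists_apply_fs_eq hΓ₂ hi
  refine (fs_eq_of_apply_eq hΓ₁ (l := β l) ?_ ?_).symm
  · rwa [← hcomm]
  · rw [← hcomm, ← hcomm, hfs]

/-- Let `Γ₁ : [n+r] → [n] × [r]` and `Γ₂ : [m+r] → [m] × [r]` be
maximal chains, and let `α : [m] → [n]` and `β : [m+r] → [n+r]` be monotone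
maps such that `(α((Γ₂ k).fst), (Γ₂ k).snd) = Γ₁(β k)` for all `k`.  Then
`β(fs_{Γ₂}(i)) = fs_{Γ₁}(i)` for every `i` with `1 ≤ i ≤ r`. -/
theorem beta_fs (n r m : ℕ)
    (Γ₁ : Fin (n + r + 1) → Fin (n + 1) × Fin (r + 1))
    (hΓ₁mono : Monotone Γ₁) (hΓ₁inj : Function.Injective Γ₁)
    (Γ₂ : Fin (m + r + 1) → Fin (m + 1) × Fin (r + 1))
    (hΓ₂mono : Monotone Γ₂) (hΓ₂inj : Function.Injective Γ₂)
    (α : Fin (m + 1) → Fin (n + 1)) (hαmono : Monotone α)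
    (β : Fin (m + r + 1) → Fin (n + r + 1)) (hβmono : Monotone β)
    (hcomm : ∀ k, (α (Γ₂ k).1, (Γ₂ k).2) = Γ₁ (β k)) :
    ∀ i : Fin (r + 1), 1 ≤ (i : ℕ) → β (fs Γ₂ i) = fs Γ₁ i := fun _ hi =>
  beta_fs_general (hΓ₁mono.strictMono_of_injective hΓ₁inj)
    (hΓ₂mono.strictMono_of_injective hΓ₂inj) hcomm hi
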